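/- arXiv:2208.11447 — 2 statements merged into one kernel-verified Lean document; each statement's English description precedes it below -/
import Mathlib

section
/- Let A ∈ ℂ^{N×N}, b ∈ ℂᴺ, t ∈ ℂ, let ε ∈ [0,1), and let S ∈ ℂ^{s×N} be an ε-subspace embedding for the Krylov space 𝒦_{m+1}(A,b). Suppose x̃ ∈ 𝒦_m(A,b) satisfies ‖S(b−(tI+A)x̃)‖ ≤ ‖S(b−(tI+A)x)‖ for all x ∈ 𝒦_m(A,b), and suppose x* ∈ 𝒦_m(A,b) satisfies ‖b−(tI+A)x*‖ ≤ ‖b−(tI+A)x‖ for all x ∈ 𝒦_m(A,b). Then ‖b−(tI+A)x̃‖ ≤ √((1+ε)/(1−ε)) · ‖b−(tI+A)x*‖. -/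
open Matrix MeasureTheory

noncomputable section

/-- `E n` is the Euclidean space `ℂⁿ`. -/
abbrev E (n : ℕ) : Type := EuclideanSpace ℂ (Fin n)

/-- Action of a (rectangular) matrix on a Euclidean vector. -/
def mulE {p q : ℕ} (M : Matrix (Fin p) (Fin q) ℂ) (v : E q) : E p :=
  Matrix.toEuclideanLin M v

/-- Spectral (operator 2-) norm of a (rectangular) matrix. -/
def opNorm {p q : ℕ} (M : Matrix (Fin p) (Fin q) ℂ) : ℝ :=
  ‖LinearMap.toContinuousLinearMap (Matrix.toEuclideanLin M)‖

/-- The `m`-th Krylov space `𝒦_m(A,b) = span{b, Ab, …, A^{m-1}b}`. -/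
def Krylov {N : ℕ} (A : Matrix (Fin N) (Fin N) ℂ) (b : E N) (m : ℕ) :
    Submodule ℂ (E N) :=
  Submodule.span ℂ {v | ∃ j < m, v = mulE (A ^ j) b}

/-- `S` is an `ε`-subspace embedding for the subspace `𝒱`. -/
def IsSubspaceEmbedding {s N : ℕ} (S : Matrix (Fin s) (Fin N) ℂ) (ε : ℝ)
    (𝒱 : Submodule ℂ (E N)) : Prop :=
  ∀ v ∈ 𝒱, (1 - ε) * ‖v‖ ^ 2 ≤ ‖mulE S v‖ ^ 2 ∧ ‖mulE S v‖ ^ 2 ≤ (1 + ε) * ‖v‖ ^ 2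

/-- A matrix is positive real if `Re(vᴴAv) > 0` for all nonzero `v`. -/
def IsPositiveReal {N : ℕ} (A : Matrix (Fin N) (Fin N) ℂ) : Prop :=
  ∀ v : E N, v ≠ 0 → 0 < (inner ℂ v (mulE A v) : ℂ).re

/-!
All residuals `b - (tI + A)x` with `x ∈ 𝒦_m(A,b)` lie in `𝒦_{m+1}(A,b)`, where `S` distorts squared
norms by factors between `1 - ε` and `1 + ε`. Comparing two residuals by their sketched norms
instead of their true norms therefore costs at most a factor `√((1 + ε) / (1 - ε))`.
-/

theorem IsSubspaceEmbedding.norm_le_sqrt_mul_norm {s N : ℕ} {S : Matrix (Fin s) (Fin N) ℂ} {ε : ℝ}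
    {𝒱 : Submodule ℂ (E N)} (hS : IsSubspaceEmbedding S ε 𝒱) (hε : ε < 1) {v w : E N}
    (hv : v ∈ 𝒱) (hw : w ∈ 𝒱) (hvw : ‖mulE S v‖ ≤ ‖mulE S w‖) :
    ‖v‖ ≤ √((1 + ε) / (1 - ε)) * ‖w‖ := by
  have hsq : (1 - ε) * ‖v‖ ^ 2 ≤ (1 + ε) * ‖w‖ ^ 2 :=
    calc (1 - ε) * ‖v‖ ^ 2 ≤ ‖mulE S v‖ ^ 2 := (hS v hv).1
      _ ≤ ‖mulE S w‖ ^ 2 := by gcongr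
      _ ≤ (1 + ε) * ‖w‖ ^ 2 := (hS w hw).2
  calc ‖v‖ ≤ √((1 + ε) / (1 - ε) * ‖w‖ ^ 2) := by
        apply Real.le_sqrt_of_sq_le
        rwa [div_mul_eq_mul_div, le_div_iff₀' (sub_pos.2 hε)]
    _ = √((1 + ε) / (1 - ε)) * ‖w‖ := by
        rw [Real.sqrt_mul' _ (sq_nonneg _), Real.sqrt_sq (norm_nonneg w)]

section Krylov

variable {N m : ℕ} (A : Matrix (Fin N) (Fin N) ℂ) {b x : E N}

theorem mulE_smul_one_add (t : ℂ) (x : E N) : mulE (t • 1 + A) x = t • x + mulE A x := by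
  simp [mulE]

theorem mulE_pow_succ (j : ℕ) (x : E N) : mulE (A ^ (j + 1)) x = mulE A (mulE (A ^ j) x) := by
  simp [mulE, Matrix.toLpLin_apply, pow_succ']

variable (b) in
theorem krylov_mono : Monotone (Krylov A b) := fun _ _ hmn =>
  Submodule.span_mono fun _ ⟨j, hj, hv⟩ => ⟨j, hj.trans_le hmn, hv⟩

variable (m b) in
theorem self_mem_krylov_succ : b ∈ Krylov A b (m + 1) :=
  Submodule.subset_span ⟨0, m.succ_pos, by simp [mulE]⟩

variable {A}

theorem mulE_mem_krylov_succ (hx : x ∈ Krylov A b m) : mulE A x ∈ Krylov A b (m + 1) := by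
  have hle : Krylov A b m ≤ (Krylov A b (m + 1)).comap (Matrix.toEuclideanLin A) := by
    refine Submodule.span_le.2 ?_
    rintro _ ⟨j, hj, rfl⟩
    exact Submodule.subset_span ⟨j + 1, Nat.succ_lt_succ hj, (mulE_pow_succ A j b).symm⟩
  exact hle hx

theorem residual_mem_krylov_succ (t : ℂ) (hx : x ∈ Krylov A b m) :
    b - mulE (t • 1 + A) x ∈ Krylov A b (m + 1) := by
  rw [mulE_smul_one_add]
  have htx : t • x ∈ Krylov A b (m + 1) :=
    Submodule.smul_mem _ t (krylov_mono A b m.le_succ hx)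
  exact sub_mem (self_mem_krylov_succ m A b) (add_mem htx (mulE_mem_krylov_succ hx))

end Krylov

theorem sketched_fAb_stmt5_general {N s m : ℕ} {A : Matrix (Fin N) (Fin N) ℂ} {b : E N} (t : ℂ)
    {ε : ℝ} (hε : ε < 1) {S : Matrix (Fin s) (Fin N) ℂ}
    (hS : IsSubspaceEmbedding S ε (Krylov A b (m + 1))) {x y : E N}
    (hx : x ∈ Krylov A b m) (hy : y ∈ Krylov A b m)
    (hxy : ‖mulE S (b - mulE (t • 1 + A) x)‖ ≤ ‖mulE S (b - mulE (t • 1 + A) y)‖) :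
    ‖b - mulE (t • 1 + A) x‖ ≤ √((1 + ε) / (1 - ε)) * ‖b - mulE (t • 1 + A) y‖ :=
  hS.norm_le_sqrt_mul_norm hε (residual_mem_krylov_succ t hx) (residual_mem_krylov_succ t hy) hxy

/-- Quasi-optimality of the sketched GMRES residual: if `S` is an `ε`-subspace embedding
for `𝒦_{m+1}(A,b)`, `x̃` minimizes the sketched residual norm and `x*` minimizes the
true residual norm over `𝒦_m(A,b)`, then
`‖b − (tI+A)x̃‖ ≤ √((1+ε)/(1−ε)) ‖b − (tI+A)x*‖`. -/
theorem sketched_fAb_stmt5 {N s m : ℕ} (A : Matrix (Fin N) (Fin N) ℂ) (b : E N)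
    (t : ℂ) (ε : ℝ) (hε0 : 0 ≤ ε) (hε1 : ε < 1)
    (S : Matrix (Fin s) (Fin N) ℂ)
    (hS : IsSubspaceEmbedding S ε (Krylov A b (m + 1)))
    (xt xs : E N)
    (hxt_mem : xt ∈ Krylov A b m) (hxs_mem : xs ∈ Krylov A b m)
    (hxt_min : ∀ x ∈ Krylov A b m,
      ‖mulE S (b - mulE (t • (1 : Matrix (Fin N) (Fin N) ℂ) + A) xt)‖
        ≤ ‖mulE S (b - mulE (t • (1 : Matrix (Fin N) (Fin N) ℂ) + A) x)‖)
    (hxs_min : ∀ x ∈ Krylov A b m,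
      ‖b - mulE (t • (1 : Matrix (Fin N) (Fin N) ℂ) + A) xs‖
        ≤ ‖b - mulE (t • (1 : Matrix (Fin N) (Fin N) ℂ) + A) x‖) :
    ‖b - mulE (t • (1 : Matrix (Fin N) (Fin N) ℂ) + A) xt‖
      ≤ Real.sqrt ((1 + ε) / (1 - ε))
          * ‖b - mulE (t • (1 : Matrix (Fin N) (Fin N) ℂ) + A) xs‖ :=
  sketched_fAb_stmt5_general t hε1 hS hxt_mem hxs_mem (hxt_min xs hxs_mem)
end
end

section
/- Let A ∈ ℂ^{N×N}, V ∈ ℂ^{N×m}, v̂ ∈ ℂᴺ, η ∈ ℂ, and let Ĥ ∈ ℂ^{m×m} be upper Hessenberg (i.e. Ĥ_{ij} = 0 whenever i > j+1), such that the Arnoldi-like decomposition AV = VĤ + η·v̂·e_mᵀ holds. Then for every polynomial q of degree at most m−1, q(A)·(V e₁) = V·q(Ĥ)·e₁. -/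
open Matrix MeasureTheory

noncomputable section

/-- Outer product `u wᵀ` of two Euclidean vectors. -/
def outerE {p q : ℕ} (u : E p) (w : E q) : Matrix (Fin p) (Fin q) ℂ :=
  fun i j => u i * w j

/-!
Write `e₁` for the first basis vector. Multiplication by an upper Hessenberg matrix `H` pushes the
support of a vector down by at most one entry, so the last entry of `H ^ k e₁` vanishes for
`k < m - 1`. The remainder of the Arnoldi-like decomposition only sees that last entry, so
`A V` and `V H` agree on these vectors, and by induction `A ^ k (V e₁) = V (H ^ k e₁)` for
`k ≤ m - 1`. Linear combinations of these identities give the claim for `q`.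
-/

section Intertwining

variable {R M M' : Type*} [CommSemiring R] [AddCommMonoid M] [Module R M] [AddCommMonoid M']
  [Module R M'] {f : Module.End R M} {g : Module.End R M'} {V : M' →ₗ[R] M} {x : M'} {n : ℕ}

lemma pow_apply_map_of_intertwine (h : ∀ k < n, f (V ((g ^ k) x)) = V ((g ^ (k + 1)) x)) :
    ∀ k ≤ n, (f ^ k) (V x) = V ((g ^ k) x)
  | 0, _ => rfl
  | k + 1, hk => by
    rw [pow_succ', Module.End.mul_apply,
      pow_apply_map_of_intertwine h k (Nat.le_of_succ_le hk), h k hk]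

lemma aeval_apply_map_of_intertwine (h : ∀ k < n, f (V ((g ^ k) x)) = V ((g ^ (k + 1)) x))
    {q : Polynomial R} (hq : q.natDegree ≤ n) :
    Polynomial.aeval f q (V x) = V (Polynomial.aeval g q x) := by
  simp only [Polynomial.aeval_eq_sum_range, LinearMap.sum_apply, LinearMap.smul_apply, map_sum,
    map_smul]
  refine Finset.sum_congr rfl fun k hk => ?_
  rw [pow_apply_map_of_intertwine h k ((Finset.mem_range_succ_iff.mp hk).trans hq)]

end Intertwining

/-- A square matrix is upper Hessenberg if it vanishes below the first subdiagonal. The indices are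
compared in `ℕ`, since addition in `Fin m` wraps around. -/
def IsUpperHessenberg {R : Type*} [Zero R] {m : ℕ} (H : Matrix (Fin m) (Fin m) R) : Prop :=
  ∀ i j : Fin m, (j : ℕ) + 1 < (i : ℕ) → H i j = 0

lemma IsUpperHessenberg.pow_apply_eq_zero {R : Type*} [Semiring R] {m : ℕ}
    {H : Matrix (Fin m) (Fin m) R} (hH : IsUpperHessenberg H) {k : ℕ} {i j : Fin m}
    (hij : (j : ℕ) + k < (i : ℕ)) : (H ^ k) i j = 0 := by
  induction k generalizing i with
  | zero => exact Matrix.one_apply_ne (Fin.ne_of_gt hij)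
  | succ k ih =>
    rw [pow_succ', Matrix.mul_apply]
    refine Finset.sum_eq_zero fun l _ => ?_
    rcases lt_or_ge ((j : ℕ) + k) l with hl | hl
    · rw [ih hl, mul_zero]
    · rw [hH i l (by omega), zero_mul]

theorem sketched_fAb_stmt8_general {R M : Type*} [CommSemiring R] [AddCommMonoid M] [Module R M]
    {n : ℕ} {f : Module.End R M} {V : (Fin (n + 1) → R) →ₗ[R] M} {w : M}
    {H : Matrix (Fin (n + 1)) (Fin (n + 1)) R} (hH : IsUpperHessenberg H)
    (hV : ∀ y, f (V y) = V (H *ᵥ y) + y (Fin.last n) • w)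
    {q : Polynomial R} (hq : q.natDegree ≤ n) :
    Polynomial.aeval f q (V (Pi.single 0 1)) = V (Polynomial.aeval H q *ᵥ Pi.single 0 1) := by
  have intertwine : ∀ k < n, f (V ((Matrix.toLinAlgEquiv' H ^ k) (Pi.single 0 1))) =
      V ((Matrix.toLinAlgEquiv' H ^ (k + 1)) (Pi.single 0 1)) := by
    intro k hk
    have last_entry : (H ^ k *ᵥ Pi.single 0 1) (Fin.last n) = 0 := by
      rw [Matrix.mulVec_single_one]
      exact hH.pow_apply_eq_zero (by simpa using hk)
    simp only [← map_pow, Matrix.toLinAlgEquiv'_apply]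
    rw [hV, last_entry, zero_smul, add_zero, Matrix.mulVec_mulVec, ← pow_succ']
  rw [aeval_apply_map_of_intertwine intertwine hq, Polynomial.aeval_algHom_apply,
    Matrix.toLinAlgEquiv'_apply]

lemma mulE_mul {p q r : ℕ} (A : Matrix (Fin p) (Fin q) ℂ) (B : Matrix (Fin q) (Fin r) ℂ)
    (x : E r) : mulE (A * B) x = mulE A (mulE B x) :=
  LinearMap.congr_fun (Matrix.toLpLin_mul_same 2 A B) x

lemma mulE_outerE_single {p q : ℕ} (u : E p) (j : Fin q) (x : E q) :
    mulE (outerE u (EuclideanSpace.single j 1)) x = x j • u := by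
  ext i
  simp [mulE, outerE, Matrix.toLpLin_apply, Matrix.mulVec, dotProduct, mul_comm]

lemma mulE_mulE_of_arnoldi {N m : ℕ} {A : Matrix (Fin N) (Fin N) ℂ}
    {V : Matrix (Fin N) (Fin m) ℂ} {H : Matrix (Fin m) (Fin m) ℂ} {u : E N} {η : ℂ} {j : Fin m}
    (h : A * V = V * H + η • outerE u (EuclideanSpace.single j 1)) (x : E m) :
    mulE A (mulE V x) = mulE V (mulE H x) + x j • η • u :=
  calc mulE A (mulE V x) = mulE (V * H + η • outerE u (EuclideanSpace.single j 1)) x := by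
        rw [← mulE_mul, h]
    _ = mulE (V * H) x + η • mulE (outerE u (EuclideanSpace.single j 1)) x := by
        simp only [mulE, map_add, map_smul, LinearMap.add_apply, LinearMap.smul_apply]
    _ = mulE V (mulE H x) + x j • η • u := by
        rw [mulE_mul, mulE_outerE_single, smul_comm]

lemma aeval_toEuclideanLin {N : ℕ} (A : Matrix (Fin N) (Fin N) ℂ) (q : Polynomial ℂ) :
    Polynomial.aeval (Matrix.toEuclideanLin A) q =
      Matrix.toEuclideanLin (Polynomial.aeval A q) :=
  Polynomial.aeval_algHom_apply (Matrix.toLpLinAlgEquiv 2) A q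

/-- Exactness of Arnoldi-like decompositions: if `AV = VĤ + η v̂ e_mᵀ` with `Ĥ`
upper Hessenberg, then `q(A)(Ve₁) = V q(Ĥ) e₁` for every polynomial `q` of degree
at most `m−1`. -/
theorem sketched_fAb_stmt8 {N m : ℕ} (hm : 0 < m)
    (A : Matrix (Fin N) (Fin N) ℂ) (V : Matrix (Fin N) (Fin m) ℂ)
    (vhat : E N) (η : ℂ) (Hhat : Matrix (Fin m) (Fin m) ℂ)
    (hHess : ∀ i j : Fin m, (j : ℕ) + 1 < (i : ℕ) → Hhat i j = 0)
    (harnoldi : A * V = V * Hhat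
      + η • outerE vhat (EuclideanSpace.single (⟨m - 1, by omega⟩ : Fin m) 1))
    (q : Polynomial ℂ) (hq : q.natDegree ≤ m - 1) :
    mulE (Polynomial.aeval A q) (mulE V (EuclideanSpace.single (⟨0, hm⟩ : Fin m) 1))
      = mulE V (mulE (Polynomial.aeval Hhat q)
          (EuclideanSpace.single (⟨0, hm⟩ : Fin m) 1)) := by
  obtain ⟨n, rfl⟩ := Nat.exists_eq_add_one.mpr hm
  let W : (Fin (n + 1) → ℂ) →ₗ[ℂ] E N :=
    Matrix.toEuclideanLin V ∘ₗ (WithLp.linearEquiv 2 ℂ (Fin (n + 1) → ℂ)).symm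
  have hW : ∀ y, Matrix.toEuclideanLin A (W y) = W (Hhat *ᵥ y) + y (Fin.last n) • η • vhat :=
    fun y => mulE_mulE_of_arnoldi harnoldi (WithLp.toLp 2 y)
  rw [mulE, ← aeval_toEuclideanLin]
  exact sketched_fAb_stmt8_general hHess hW hq
end
end
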